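/- Let T > 0 and let b, b̃, σ, σ̃ belong to the class M with σ(x) > 0 and σ̃(x) > 0 for all x. For k = 1, 2, let u_k be a classical solution of the parabolic equation associated with (b, σ, f_k) and let ũ_k be a classical solution of the parabolic equation associated with (b̃, σ̃, f_k), where f_k(x) = x^k. If there exist ε ∈ (0, T) and a point x₀ ∈ ℝ such that u_k(t,x₀) = ũ_k(t,x₀) and ∂_x u_k(t,x₀) = ∂_x ũ_k(t,x₀) for all t ∈ (0, ε) and k = 1, 2, then b(x) = b̃(x) and σ(x) = σ̃(x) for all x ∈ ℝ. -/

import Mathlib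

open Set Filter

/-- A function `ψ : ℝ → ℝ` is piecewise analytic if there exist `δ > 0`, a strictly
increasing sequence `(κ j)_{j ∈ ℤ}` tending to `-∞` at `-∞` and `+∞` at `+∞` with
`κ (j+1) - κ j > δ`, and functions `φ j` analytic on `[κ j, κ (j+1)]`, such that
`ψ = φ j` on `[κ j, κ (j+1))`. -/
def PiecewiseAnalytic (ψ : ℝ → ℝ) : Prop :=
  ∃ (δ : ℝ) (κ : ℤ → ℝ) (φ : ℤ → ℝ → ℝ),
    0 < δ ∧ StrictMono κ ∧
    Tendsto κ atBot atBot ∧ Tendsto κ atTop atTop ∧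
    (∀ j : ℤ, δ < κ (j + 1) - κ j) ∧
    (∀ j : ℤ, AnalyticOn ℝ (φ j) (Icc (κ j) (κ (j + 1)))) ∧
    (∀ j : ℤ, ∀ x ∈ Ico (κ j) (κ (j + 1)), ψ x = φ j x)

/-- The class `M` of Lipschitz-continuous, piecewise analytic functions on `ℝ`. -/
def ClassM (ψ : ℝ → ℝ) : Prop :=
  (∃ K, LipschitzWith K ψ) ∧ PiecewiseAnalytic ψ

/-- `u : [0,T) × ℝ → ℝ` is a classical solution of
`∂ₜ u = (1/2) σ(x)² ∂ₓₓ u + b(x) ∂ₓ u`, `u(0, ·) = f`: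
`u`, `∂ₜ u`, `∂ₓ u`, `∂ₓₓ u` exist and are continuous on `[0,T) × ℝ`, the PDE holds
there, and the initial condition holds. -/
def IsClassicalSolution (T : ℝ) (b σ f : ℝ → ℝ) (u : ℝ → ℝ → ℝ) : Prop :=
  ContinuousOn (fun p : ℝ × ℝ => u p.1 p.2) (Ico 0 T ×ˢ univ) ∧
  (∀ t ∈ Ico 0 T, ∀ x : ℝ, DifferentiableAt ℝ (fun s => u s x) t) ∧
  (∀ t ∈ Ico 0 T, ∀ x : ℝ, DifferentiableAt ℝ (fun y => u t y) x) ∧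
  (∀ t ∈ Ico 0 T, ∀ x : ℝ, DifferentiableAt ℝ (deriv (fun y => u t y)) x) ∧
  ContinuousOn (fun p : ℝ × ℝ => deriv (fun s => u s p.2) p.1) (Ico 0 T ×ˢ univ) ∧
  ContinuousOn (fun p : ℝ × ℝ => deriv (fun y => u p.1 y) p.2) (Ico 0 T ×ˢ univ) ∧
  ContinuousOn (fun p : ℝ × ℝ => deriv (deriv (fun y => u p.1 y)) p.2) (Ico 0 T ×ˢ univ) ∧
  (∀ t ∈ Ico 0 T, ∀ x : ℝ,
    deriv (fun s => u s x) t =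
      (1 / 2) * (σ x) ^ 2 * deriv (deriv (fun y => u t y)) x
        + b x * deriv (fun y => u t y) x) ∧
  (∀ x : ℝ, u 0 x = f x)

theorem deriv_nonneg_of_right {g : ℝ → ℝ} {d p q : ℝ} (hg : HasDerivAt g d p) (hpq : p < q)
    (h : ∀ s ∈ Ioo p q, g p ≤ g s) : 0 ≤ d := by
  have h1 := (hasDerivWithinAt_iff_tendsto_slope' (s := Ioi p) (by simp)).1 hg.hasDerivWithinAt
  refine ge_of_tendsto h1 ?_
  filter_upwards [Ioo_mem_nhdsGT hpq] with s hs
  rw [slope_def_field]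
  exact div_nonneg (by linarith [h s hs]) (by linarith [hs.1])

theorem deriv_nonpos_of_left {g : ℝ → ℝ} {d p q : ℝ} (hg : HasDerivAt g d p) (hpq : q < p)
    (h : ∀ s ∈ Ioo q p, g p ≤ g s) : d ≤ 0 := by
  have h1 := (hasDerivWithinAt_iff_tendsto_slope' (s := Iio p) (by simp)).1 hg.hasDerivWithinAt
  refine le_of_tendsto h1 ?_
  filter_upwards [Ioo_mem_nhdsLT hpq] with s hs
  rw [slope_def_field]
  exact div_nonpos_of_nonneg_of_nonpos (by linarith [h s hs]) (by linarith [hs.2])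

theorem second_deriv_nonneg {g g' : ℝ → ℝ} {d p : ℝ} (hg : ∀ x, HasDerivAt g (g' x) x)
    (hg' : HasDerivAt g' d p) (hmin : IsLocalMin g p) : 0 ≤ d := by
  by_contra hd
  push Not at hd
  have e : deriv g = g' := funext fun x => (hg x).deriv
  have hz : g' p = 0 := hmin.hasDerivAt_eq_zero (hg p)
  have hmax : IsLocalMax g p := by
    apply isLocalMax_of_deriv_deriv_neg
    · rw [e, hg'.deriv]; exact hd
    · rw [e, hz]
    · exact (hg p).continuousAt
  have hc : g =ᶠ[nhds p] fun _ => g p := by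
    filter_upwards [hmin, hmax] with x h1 h2
    exact le_antisymm h2 h1
  have h2 := hc.deriv.deriv_eq
  rw [e, hg'.deriv] at h2
  simp at h2
  linarith

/-- Weak maximum principle, strict version. -/
theorem weak_max {τ x₀ X : ℝ} (hτ : 0 < τ) (hX : x₀ < X) {a β : ℝ → ℝ} {z zt zx zxx : ℝ → ℝ → ℝ}
    (ha : ∀ x ∈ Icc x₀ X, 0 < a x)
    (hc : ContinuousOn (fun p : ℝ × ℝ => z p.1 p.2) (Icc 0 τ ×ˢ Icc x₀ X))
    (ht : ∀ t ∈ Icc 0 τ, ∀ x, HasDerivAt (fun s => z s x) (zt t x) t)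
    (hx : ∀ t ∈ Icc 0 τ, ∀ x, HasDerivAt (fun y => z t y) (zx t x) x)
    (hxx : ∀ t ∈ Icc 0 τ, ∀ x, HasDerivAt (fun y => zx t y) (zxx t x) x)
    (hpde : ∀ t ∈ Icc 0 τ, ∀ x ∈ Ioo x₀ X, a x * zxx t x + β x * zx t x < zt t x)
    (h0 : ∀ x ∈ Icc x₀ X, 0 ≤ z 0 x) (hl : ∀ t ∈ Icc 0 τ, 0 ≤ z t x₀)
    (hr : ∀ t ∈ Icc 0 τ, 0 ≤ z t X) :
    ∀ t ∈ Icc 0 τ, ∀ x ∈ Icc x₀ X, 0 ≤ z t x := by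
  obtain ⟨⟨t, x⟩, ⟨htm, hxm⟩, hmin⟩ := (isCompact_Icc.prod isCompact_Icc).exists_isMinOn
    ⟨((0:ℝ), x₀), ⟨⟨le_rfl, hτ.le⟩, ⟨le_rfl, hX.le⟩⟩⟩ hc
  simp only at htm hxm
  have hm : ∀ s ∈ Icc 0 τ, ∀ y ∈ Icc x₀ X, z t x ≤ z s y := fun s hs y hy =>
    hmin (show ((s, y) : ℝ × ℝ) ∈ Icc 0 τ ×ˢ Icc x₀ X from ⟨hs, hy⟩)
  suffices 0 ≤ z t x from fun s hs y hy => this.trans (hm s hs y hy)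
  rcases htm.1.eq_or_lt with h | h
  · rw [← h]; exact h0 x hxm
  rcases hxm.1.eq_or_lt with h' | h'
  · rw [← h']; exact hl t htm
  rcases hxm.2.eq_or_lt with h'' | h''
  · rw [h'']; exact hr t htm
  exfalso
  have e1 : zt t x ≤ 0 := deriv_nonpos_of_left (ht t htm x) h
    fun s hs => hm s ⟨hs.1.le, hs.2.le.trans htm.2⟩ x hxm
  have lm : IsLocalMin (fun y => z t y) x := by
    filter_upwards [Ioo_mem_nhds h' h''] with y hy
    exact hm t htm y ⟨hy.1.le, hy.2.le⟩
  have e2 : zx t x = 0 := lm.hasDerivAt_eq_zero (hx t htm x)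
  have e3 : 0 ≤ zxx t x := second_deriv_nonneg (hx t htm) (hxx t htm x) lm
  have e4 := hpde t htm x ⟨h', h''⟩
  rw [e2] at e4
  nlinarith [ha x hxm, mul_nonneg (ha x hxm).le e3]

/-- Hopf-type boundary lemma with an explicit barrier. -/
theorem hopf {τ x₀ X c : ℝ} (hτ : 0 < τ) (hX : x₀ < X) (hcp : 0 < c)
    {a β : ℝ → ℝ} {w wt wx wxx : ℝ → ℝ → ℝ}
    (ha : ∀ x ∈ Icc x₀ X, 0 < a x) (hac : Continuous a) (hβc : Continuous β)
    (hc : ContinuousOn (fun p : ℝ × ℝ => w p.1 p.2) (Icc 0 τ ×ˢ Icc x₀ X))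
    (ht : ∀ t ∈ Icc 0 τ, ∀ x, HasDerivAt (fun s => w s x) (wt t x) t)
    (hx : ∀ t ∈ Icc 0 τ, ∀ x, HasDerivAt (fun y => w t y) (wx t x) x)
    (hxx : ∀ t ∈ Icc 0 τ, ∀ x, HasDerivAt (fun y => wx t y) (wxx t x) x)
    (hpde : ∀ t ∈ Icc 0 τ, ∀ x ∈ Ioo x₀ X, a x * wxx t x + β x * wx t x ≤ wt t x)
    (h0 : ∀ x ∈ Icc x₀ X, 0 ≤ w 0 x) (hl : ∀ t ∈ Icc 0 τ, 0 ≤ w t x₀)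
    (hr : ∀ t ∈ Icc 0 τ, c * t ≤ w t X) (hz : w τ x₀ = 0) : 0 < wx τ x₀ := by
  have hne : (Icc x₀ X).Nonempty := ⟨x₀, le_rfl, hX.le⟩
  obtain ⟨xa, hxa, hmina⟩ := isCompact_Icc.exists_isMinOn hne hac.continuousOn
  obtain ⟨xb, hxb, hminb⟩ := isCompact_Icc.exists_isMinOn hne hβc.continuousOn
  have ha0 := ha xa hxa
  set Y := X - x₀ with hY
  have hYp : 0 < Y := by linarith
  set K := (Y + 1) / τ ^ 2 with hK
  have hKp : 0 < K := by positivity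
  have hKτ : K * τ ^ 2 = Y + 1 := by rw [hK]; field_simp
  obtain ⟨l, hlp, hlam⟩ : ∃ l : ℝ, 0 < l ∧ 0 < a xa * l + β xb - 2 * K * τ := by
    refine ⟨(|β xb| + 2 * K * τ + 1) / a xa, by positivity, ?_⟩
    have : a xa * ((|β xb| + 2 * K * τ + 1) / a xa) = |β xb| + 2 * K * τ + 1 := by field_simp
    rw [this]
    linarith [neg_abs_le (β xb)]
  set η := c * τ / (2 * (Y + 1) * Real.exp (l * Y)) with hη
  have hηp : 0 < η := by positivity
  have hηe : η * (2 * (Y + 1) * Real.exp (l * Y)) = c * τ := by rw [hη]; field_simp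
  set E : ℝ → ℝ → ℝ := fun t x => Real.exp (l * (x - x₀ - K * (t - τ) ^ 2)) with hE
  have hEp : ∀ t x, 0 < E t x := fun t x => Real.exp_pos _
  have hEt : ∀ t x, HasDerivAt (fun s => E s x) (E t x * (l * (-(K * (2 * (t - τ)))))) t := by
    intro t x
    apply HasDerivAt.exp
    have h1 : HasDerivAt (fun s : ℝ => (s - τ) ^ 2) (2 * (t - τ)) t := by
      simpa using ((hasDerivAt_id t).sub_const τ).fun_pow 2
    simpa using ((h1.const_mul K).const_sub (x - x₀)).const_mul l
  have hEx : ∀ t x, HasDerivAt (fun y => E t y) (E t x * l) x := by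
    intro t x
    apply HasDerivAt.exp
    simpa using ((((hasDerivAt_id x).sub_const x₀)).sub_const (K * (t - τ) ^ 2)).const_mul l
  have key := weak_max hτ hX (β := β) (z := fun t x => w t x - η * (E t x - 1))
    (zt := fun t x => wt t x - η * (E t x * (l * (-(K * (2 * (t - τ)))))))
    (zx := fun t x => wx t x - η * (E t x * l))
    (zxx := fun t x => wxx t x - η * (E t x * l * l)) ha
    (hc.sub (Continuous.continuousOn (by fun_prop)))
    (fun t h x => (ht t h x).sub (((hEt t x).sub_const 1).const_mul η))
    (fun t h x => (hx t h x).sub (((hEx t x).sub_const 1).const_mul η))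
    (fun t h x => (hxx t h x).sub (((hEx t x).mul_const l).const_mul η))
    ?_ ?_ ?_ ?_ τ ⟨hτ.le, le_rfl⟩
  · have hd : 0 ≤ wx τ x₀ - η * (E τ x₀ * l) := by
      have h1 := (hx τ ⟨hτ.le, le_rfl⟩ x₀).sub (((hEx τ x₀).sub_const 1).const_mul η)
      refine deriv_nonneg_of_right h1 hX fun s hs => ?_
      have h2 := key s ⟨hs.1.le, hs.2.le⟩
      have h3 : E τ x₀ = 1 := by simp [hE]
      simp only [Pi.sub_apply, h3, hz]
      simpa using h2
    have : 0 < η * (E τ x₀ * l) := mul_pos hηp (mul_pos (hEp _ _) hlp)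
    linarith
  · intro t h x hxI
    have hp := hpde t h x hxI
    have hI : x ∈ Icc x₀ X := ⟨hxI.1.le, hxI.2.le⟩
    have e1 : a xa ≤ a x := hmina hI
    have e2 : β xb ≤ β x := hminb hI
    have e3 : 0 < a x * l + β x + 2 * K * (t - τ) := by
      have := mul_le_mul_of_nonneg_right e1 hlp.le
      have := mul_nonneg hKp.le h.1
      linarith
    have := mul_pos (mul_pos (mul_pos hηp (hEp t x)) hlp) e3
    nlinarith
  · intro x hxI
    have : E 0 x ≤ 1 := by
      apply Real.exp_le_one_iff.2
      apply mul_nonpos_of_nonneg_of_nonpos hlp.le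
      have : K * (0 - τ) ^ 2 = Y + 1 := by rw [← hKτ]; ring
      rw [this]
      linarith [hxI.2]
    have := h0 x hxI
    nlinarith
  · intro t h
    have : E t x₀ ≤ 1 := by
      apply Real.exp_le_one_iff.2
      apply mul_nonpos_of_nonneg_of_nonpos hlp.le
      nlinarith [sq_nonneg (t - τ)]
    have := hl t h
    nlinarith
  · intro t h
    have h1 := hr t h
    have hct : 0 ≤ c * t := mul_nonneg hcp.le h.1
    by_cases hs : E t X ≤ 1
    · nlinarith
    · have hq : 0 < l * (X - x₀ - K * (t - τ) ^ 2) := by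
        by_contra hh
        exact hs (Real.exp_le_one_iff.2 (not_lt.1 hh))
      have hq2 : K * (t - τ) ^ 2 < Y := by
        have := (mul_pos_iff_of_pos_left hlp).1 hq
        linarith
      -- 2 (Y+1) t ≥ τ
      have hq3 : τ ≤ 2 * (Y + 1) * t := by
        have h5 : K * (t - τ) ^ 2 * τ = (Y + 1) * τ - 2 * (Y + 1) * t + K * t ^ 2 * τ := by
          have : K * (t - τ) ^ 2 * τ = K * τ ^ 2 * τ - 2 * (K * τ ^ 2) * t + K * t ^ 2 * τ := by ring
          rw [this, hKτ]
        have h6 : 0 ≤ K * t ^ 2 * τ := by positivity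
        have h7 := mul_lt_mul_of_pos_right hq2 hτ
        nlinarith
      have hEl : E t X ≤ Real.exp (l * Y) := by
        apply Real.exp_le_exp.2
        apply mul_le_mul_of_nonneg_left _ hlp.le
        have : 0 ≤ K * (t - τ) ^ 2 := by positivity
        linarith
      have h8 : η * Real.exp (l * Y) * τ ≤ c * t * τ := by
        calc η * Real.exp (l * Y) * τ ≤ η * Real.exp (l * Y) * (2 * (Y + 1) * t) := by gcongr
          _ = c * t * τ := by linear_combination t * hηe
      have h9 := le_of_mul_le_mul_right h8 hτ
      have h10 := mul_le_mul_of_nonneg_left hEl hηp.le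
      nlinarith

theorem core {T : ℝ} {b bt σ σt f : ℝ → ℝ} {u ut : ℝ → ℝ → ℝ}
    (hbc : Continuous b) (hσc : Continuous σ) (hσ : ∀ x, 0 < σ x)
    (hu : IsClassicalSolution T b σ f u) (hut : IsClassicalSolution T bt σt f ut)
    {ε x₀ x₁ : ℝ} (hε : ε ∈ Ioo 0 T)
    (hobs : ∀ t ∈ Ioo 0 ε, u t x₀ = ut t x₀)
    (hobsd : ∀ t ∈ Ioo 0 ε, deriv (fun y => u t y) x₀ = deriv (fun y => ut t y) x₀)
    (hx₁ : x₀ ≤ x₁)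
    (hA0 : ∀ x ∈ Ico x₀ x₁, (1 / 2) * σ x ^ 2 - (1 / 2) * σt x ^ 2 = 0)
    (hB0 : ∀ x ∈ Ico x₀ x₁, b x - bt x = 0)
    {n : ℕ} {gA gB : ℝ → ℝ} (hgA : ContinuousAt gA x₁) (hgB : ContinuousAt gB x₁)
    (hA : ∀ᶠ x in nhdsWithin x₁ (Ici x₁),
      (1 / 2) * σ x ^ 2 - (1 / 2) * σt x ^ 2 = (x - x₁) ^ n * gA x)
    (hB : ∀ᶠ x in nhdsWithin x₁ (Ici x₁), b x - bt x = (x - x₁) ^ n * gB x)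
    (hne : gA x₁ * deriv (deriv (fun y => ut 0 y)) x₁ + gB x₁ * deriv (fun y => ut 0 y) x₁ ≠ 0) :
    False := by
  obtain ⟨uc, ud, ux, uxx, -, -, -, up, u0⟩ := hu
  obtain ⟨utc, utd, utx, utxx, -, utxc, utxxc, utp, ut0⟩ := hut
  have hT : 0 < T := hε.1.trans hε.2
  set S := gA x₁ * deriv (deriv (fun y => ut 0 y)) x₁ + gB x₁ * deriv (fun y => ut 0 y) x₁ with hS
  have hS2 : 0 < S * S := mul_self_pos.2 hne
  have hm : ((0:ℝ), x₁) ∈ Ico 0 T ×ˢ (univ : Set ℝ) := ⟨⟨le_rfl, hT⟩, trivial⟩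
  have hH : ContinuousWithinAt (fun p : ℝ × ℝ => S * (gA p.2 * deriv (deriv (fun y => ut p.1 y)) p.2
      + gB p.2 * deriv (fun y => ut p.1 y) p.2)) (Ico 0 T ×ˢ univ) (0, x₁) := by
    have h1 : ContinuousWithinAt (fun p : ℝ × ℝ => gA p.2) (Ico 0 T ×ˢ univ) (0, x₁) :=
      (ContinuousAt.comp (f := Prod.snd) (x := ((0:ℝ), x₁)) hgA
        continuousAt_snd).continuousWithinAt
    have h2 : ContinuousWithinAt (fun p : ℝ × ℝ => gB p.2) (Ico 0 T ×ˢ univ) (0, x₁) :=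
      (ContinuousAt.comp (f := Prod.snd) (x := ((0:ℝ), x₁)) hgB
        continuousAt_snd).continuousWithinAt
    exact continuousWithinAt_const.mul ((h1.mul (utxxc _ hm)).add (h2.mul (utxc _ hm)))
  have hHpos := hH.eventually (lt_mem_nhds (a := 0) (by exact hS2))
  obtain ⟨r, hr, hball⟩ := Metric.mem_nhdsWithin_iff.1 hHpos
  obtain ⟨r', hr', hball'⟩ := Metric.mem_nhdsWithin_iff.1 (hA.and hB)
  set ρ := min r r' with hρ
  have hρp : 0 < ρ := lt_min hr hr'
  have hsrc : ∀ t ∈ Ico 0 T, t < r → ∀ x ∈ Ico x₁ (x₁ + ρ),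
      ∃ P, 0 < P ∧ S * (((1 / 2) * σ x ^ 2 - (1 / 2) * σt x ^ 2) * deriv (deriv (fun y => ut t y)) x
        + (b x - bt x) * deriv (fun y => ut t y) x) = (x - x₁) ^ n * P := by
    intro t ht htr x hx
    have e1 := @hball (t, x) ⟨by
      rw [Metric.mem_ball, Prod.dist_eq]
      apply max_lt
      · simpa [Real.dist_eq, abs_of_nonneg ht.1] using htr
      · simp only [Real.dist_eq]
        rw [abs_of_nonneg (by linarith [hx.1])]
        linarith [hx.2, min_le_left r r'], ⟨ht, trivial⟩⟩
    have e2 := @hball' x ⟨by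
      rw [Metric.mem_ball, Real.dist_eq, abs_of_nonneg (by linarith [hx.1])]
      linarith [hx.2, min_le_right r r'], hx.1⟩
    refine ⟨_, e1, ?_⟩
    rw [e2.1, e2.2]
    ring
  set X := x₁ + ρ / 2 with hX
  have hXm : X ∈ Ico x₁ (x₁ + ρ) := ⟨by linarith, by linarith⟩
  -- derivative facts
  have dt : ∀ t ∈ Ico 0 T, ∀ x, HasDerivAt (fun s => S * (u s x - ut s x))
      (S * (deriv (fun s => u s x) t - deriv (fun s => ut s x) t)) t := fun t ht x =>
    ((ud t ht x).hasDerivAt.sub (utd t ht x).hasDerivAt).const_mul S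
  have dx : ∀ t ∈ Ico 0 T, ∀ x, HasDerivAt (fun y => S * (u t y - ut t y))
      (S * (deriv (fun y => u t y) x - deriv (fun y => ut t y) x)) x := fun t ht x =>
    ((ux t ht x).hasDerivAt.sub (utx t ht x).hasDerivAt).const_mul S
  have dxx : ∀ t ∈ Ico 0 T, ∀ x, HasDerivAt
      (fun y => S * (deriv (fun y => u t y) y - deriv (fun y => ut t y) y))
      (S * (deriv (deriv (fun y => u t y)) x - deriv (deriv (fun y => ut t y)) x)) x :=
    fun t ht x => ((uxx t ht x).hasDerivAt.sub (utxx t ht x).hasDerivAt).const_mul S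
  have h00 : (0:ℝ) ∈ Ico 0 T := ⟨le_rfl, hT⟩
  have huu : (fun y => u 0 y) = fun y => ut 0 y := funext fun y => by rw [u0, ut0]
  -- positivity of time derivative at X
  obtain ⟨P, hP, hPe⟩ := hsrc 0 h00 hr X hXm
  have hDpos : 0 < S * (deriv (fun s => u s X) 0 - deriv (fun s => ut s X) 0) := by
    have e : S * (deriv (fun s => u s X) 0 - deriv (fun s => ut s X) 0) = (X - x₁) ^ n * P := by
      rw [up 0 h00, utp 0 h00, huu, ← hPe]
      ring
    rw [e]
    have : 0 < X - x₁ := by linarith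
    positivity
  set D := S * (deriv (fun s => u s X) 0 - deriv (fun s => ut s X) 0) with hD
  obtain ⟨τ₀, hτ₀, hlow⟩ : ∃ τ₀ > 0, ∀ t ∈ Ico 0 τ₀, D / 2 * t ≤ S * (u t X - ut t X) := by
    have h1 := (hasDerivWithinAt_iff_tendsto_slope' (s := Ioi (0:ℝ)) (by simp)).1
      (dt 0 h00 X).hasDerivWithinAt
    have h2 := h1.eventually (lt_mem_nhds (a := D / 2) (by linarith))
    obtain ⟨q, hq, hq2⟩ := mem_nhdsGT_iff_exists_Ioo_subset.1 h2
    refine ⟨q, hq, fun t ht => ?_⟩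
    rcases ht.1.eq_or_lt with h | h
    · rw [← h, u0, ut0]; simp
    · have h3 : D / 2 < slope (fun s => S * (u s X - ut s X)) 0 t := hq2 ⟨h, ht.2⟩
      rw [slope_def_field, u0 X, ut0 X, lt_div_iff₀ (by linarith)] at h3
      linarith
  obtain ⟨τ, hτ, hτl⟩ := exists_between (lt_min hr (lt_min hε.1 hτ₀))
  have hτr : τ < r := hτl.trans_le (min_le_left _ _)
  have hτε : τ < ε := hτl.trans_le ((min_le_right _ _).trans (min_le_left _ _))
  have hττ : τ < τ₀ := hτl.trans_le ((min_le_right _ _).trans (min_le_right _ _))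
  have hIc : ∀ t ∈ Icc 0 τ, t ∈ Ico 0 T := fun t ht => ⟨ht.1, by linarith [ht.2, hε.2]⟩
  have hsub : Icc 0 τ ×ˢ Icc x₀ X ⊆ Ico 0 T ×ˢ (univ : Set ℝ) := fun p hp =>
    ⟨hIc _ hp.1, trivial⟩
  have hobs' : ∀ t ∈ Icc 0 τ, u t x₀ = ut t x₀ := by
    intro t ht
    rcases ht.1.eq_or_lt with h | h
    · rw [← h, u0, ut0]
    · exact hobs t ⟨h, by linarith [ht.2]⟩
  have := hopf (X := X) (x₀ := x₀) (c := D / 2) hτ (by linarith) (by linarith)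
    (a := fun x => (1 / 2) * σ x ^ 2) (β := b) (w := fun t x => S * (u t x - ut t x))
    (fun x _ => by have := hσ x; positivity) (by fun_prop) hbc
    ((continuousOn_const.mul (uc.sub utc)).mono hsub)
    (fun t ht => dt t (hIc t ht)) (fun t ht => dx t (hIc t ht)) (fun t ht => dxx t (hIc t ht))
    ?_ ?_ ?_ ?_ ?_
  · rw [hobsd τ ⟨hτ, hτε⟩] at this
    simp at this
  · intro t ht x hx
    rw [up t (hIc t ht), utp t (hIc t ht)]
    have : 0 ≤ S * (((1 / 2) * σ x ^ 2 - (1 / 2) * σt x ^ 2) * deriv (deriv (fun y => ut t y)) x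
        + (b x - bt x) * deriv (fun y => ut t y) x) := by
      rcases lt_or_ge x x₁ with h | h
      · rw [hA0 x ⟨hx.1.le, h⟩, hB0 x ⟨hx.1.le, h⟩]; simp
      · obtain ⟨P, hP, e⟩ := hsrc t (hIc t ht) (by linarith [ht.2]) x ⟨h, by linarith [hx.2]⟩
        rw [e]
        have : 0 ≤ x - x₁ := by linarith
        positivity
    linarith
  · intro x _
    rw [u0, ut0]; simp
  · intro t ht
    rw [hobs' t ht]; simp
  · intro t ht
    exact hlow t ⟨ht.1, by linarith [ht.2]⟩
  · rw [hobs' τ ⟨hτ.le, le_rfl⟩]; simp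

/-- Right germs of `ψ` are germs of analytic functions. -/
def RightAnalytic (ψ : ℝ → ℝ) : Prop :=
  ∀ x, ∃ φ : ℝ → ℝ, AnalyticAt ℝ φ x ∧ ∀ᶠ y in nhdsWithin x (Ici x), ψ y = φ y

theorem common_factor {F G : ℝ → ℝ} {x : ℝ} (hF : AnalyticAt ℝ F x) (hG : AnalyticAt ℝ G x) :
    ((∀ᶠ y in nhds x, F y = 0) ∧ (∀ᶠ y in nhds x, G y = 0)) ∨
    ∃ (n : ℕ) (gF gG : ℝ → ℝ), ContinuousAt gF x ∧ ContinuousAt gG x ∧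
      (∀ᶠ y in nhds x, F y = (y - x) ^ n * gF y) ∧ (∀ᶠ y in nhds x, G y = (y - x) ^ n * gG y) ∧
      (gF x ≠ 0 ∨ gG x ≠ 0) := by
  by_cases h1 : ∀ᶠ y in nhds x, F y = 0
  · by_cases h2 : ∀ᶠ y in nhds x, G y = 0
    · exact Or.inl ⟨h1, h2⟩
    · obtain ⟨n, g, hg, hg0, he⟩ := hG.exists_eventuallyEq_pow_smul_nonzero_iff.2 h2
      exact Or.inr ⟨n, 0, g, continuousAt_const, hg.continuousAt, by simpa using h1, he, Or.inr hg0⟩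
  · obtain ⟨n, g, hg, hg0, he⟩ := hF.exists_eventuallyEq_pow_smul_nonzero_iff.2 h1
    by_cases h2 : ∀ᶠ y in nhds x, G y = 0
    · exact Or.inr ⟨n, g, 0, hg.continuousAt, continuousAt_const, he, by simpa using h2, Or.inl hg0⟩
    · obtain ⟨m, k, hk, hk0, he'⟩ := hG.exists_eventuallyEq_pow_smul_nonzero_iff.2 h2
      have hp : ∀ j : ℕ, ContinuousAt (fun y : ℝ => (y - x) ^ j) x := fun j => by fun_prop
      rcases le_total n m with h | h
      · refine Or.inr ⟨n, g, fun y => (y - x) ^ (m - n) * k y, hg.continuousAt,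
          (hp _).mul hk.continuousAt, he, ?_, Or.inl hg0⟩
        filter_upwards [he'] with y hy
        rw [hy, ← mul_assoc, ← pow_add, Nat.add_sub_cancel' h, smul_eq_mul]
      · refine Or.inr ⟨m, fun y => (y - x) ^ (n - m) * g y, k,
          (hp _).mul hg.continuousAt, hk.continuousAt, ?_, he', Or.inr hk0⟩
        filter_upwards [he] with y hy
        rw [hy, ← mul_assoc, ← pow_add, Nat.add_sub_cancel' h, smul_eq_mul]

theorem right_side {T : ℝ} {b bt σ σt : ℝ → ℝ}
    (hbc : Continuous b) (hσc : Continuous σ)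
    (hb : RightAnalytic b) (hbt : RightAnalytic bt) (hs : RightAnalytic σ)
    (hst : RightAnalytic σt) (hσ : ∀ x, 0 < σ x) (hσt : ∀ x, 0 < σt x)
    {u₁ u₂ ut₁ ut₂ : ℝ → ℝ → ℝ}
    (hu₁ : IsClassicalSolution T b σ (fun x => x ^ 1) u₁)
    (hu₂ : IsClassicalSolution T b σ (fun x => x ^ 2) u₂)
    (hut₁ : IsClassicalSolution T bt σt (fun x => x ^ 1) ut₁)
    (hut₂ : IsClassicalSolution T bt σt (fun x => x ^ 2) ut₂)
    {ε : ℝ} (hε : ε ∈ Ioo 0 T) {x₀ : ℝ}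
    (hobs₁ : ∀ t ∈ Ioo 0 ε, u₁ t x₀ = ut₁ t x₀)
    (hobs₂ : ∀ t ∈ Ioo 0 ε, u₂ t x₀ = ut₂ t x₀)
    (hobsd₁ : ∀ t ∈ Ioo 0 ε,
      deriv (fun y => u₁ t y) x₀ = deriv (fun y => ut₁ t y) x₀)
    (hobsd₂ : ∀ t ∈ Ioo 0 ε,
      deriv (fun y => u₂ t y) x₀ = deriv (fun y => ut₂ t y) x₀) :
    ∀ x, x₀ ≤ x → b x = bt x ∧ σ x = σt x := by
  by_contra hcon
  push Not at hcon
  have hT : 0 < T := hε.1.trans hε.2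
  set N : Set ℝ := {x | x₀ ≤ x ∧ ¬ (b x - bt x = 0 ∧ (1 / 2) * σ x ^ 2 - (1 / 2) * σt x ^ 2 = 0)}
    with hN
  have hNne : N.Nonempty := by
    obtain ⟨x, hx, h⟩ := hcon
    refine ⟨x, hx, fun ⟨h1, h2⟩ => h (by linarith) ?_⟩
    have h3 := hσ x
    have h4 := hσt x
    nlinarith
  have hNb : BddBelow N := ⟨x₀, fun x hx => hx.1⟩
  set x₁ := sInf N with hx₁
  have h01 : x₀ ≤ x₁ := le_csInf hNne fun x hx => hx.1
  have hagree : ∀ x ∈ Ico x₀ x₁, b x - bt x = 0 ∧ (1 / 2) * σ x ^ 2 - (1 / 2) * σt x ^ 2 = 0 := by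
    intro x hx
    by_contra h
    exact notMem_of_lt_csInf hx.2 hNb ⟨hx.1, h⟩
  obtain ⟨φb, ab, eb⟩ := hb x₁
  obtain ⟨φbt, abt, ebt⟩ := hbt x₁
  obtain ⟨φs, as, es⟩ := hs x₁
  obtain ⟨φst, ast, est⟩ := hst x₁
  have hFan : AnalyticAt ℝ (fun x => (1 / 2) * φs x ^ 2 - (1 / 2) * φst x ^ 2) x₁ :=
    (analyticAt_const.mul (as.pow 2)).sub (analyticAt_const.mul (ast.pow 2))
  have hGan : AnalyticAt ℝ (fun x => φb x - φbt x) x₁ := ab.sub abt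
  rcases common_factor hFan hGan with ⟨hF, hG⟩ | ⟨n, gA, gB, cA, cB, eA, eB, hne⟩
  · have hev : ∀ᶠ x in nhdsWithin x₁ (Ici x₁),
        b x - bt x = 0 ∧ (1 / 2) * σ x ^ 2 - (1 / 2) * σt x ^ 2 = 0 := by
      filter_upwards [eb, ebt, es, est, hF.filter_mono nhdsWithin_le_nhds,
        hG.filter_mono nhdsWithin_le_nhds] with x h1 h2 h3 h4 h5 h6
      rw [h1, h2, h3, h4]
      exact ⟨h6, h5⟩
    obtain ⟨q, hq, hq2⟩ := mem_nhdsGE_iff_exists_Ico_subset.1 hev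
    obtain ⟨y, hy, hyq⟩ := exists_lt_of_csInf_lt hNne hq
    exact hy.2 (hq2 ⟨csInf_le hNb hy, hyq⟩)
  · have hA : ∀ᶠ x in nhdsWithin x₁ (Ici x₁),
        (1 / 2) * σ x ^ 2 - (1 / 2) * σt x ^ 2 = (x - x₁) ^ n * gA x := by
      filter_upwards [es, est, eA.filter_mono nhdsWithin_le_nhds] with x h3 h4 h5
      rw [h3, h4, h5]
    have hB : ∀ᶠ x in nhdsWithin x₁ (Ici x₁), b x - bt x = (x - x₁) ^ n * gB x := by
      filter_upwards [eb, ebt, eB.filter_mono nhdsWithin_le_nhds] with x h3 h4 h5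
      rw [h3, h4, h5]
    have i1 : (fun y => ut₁ 0 y) = fun y => y := funext fun y => by
      rw [hut₁.2.2.2.2.2.2.2.2 y]; exact pow_one y
    have i2 : (fun y => ut₂ 0 y) = fun y => y ^ 2 := funext fun y => hut₂.2.2.2.2.2.2.2.2 y
    have d1 : deriv (fun y : ℝ => y) = fun _ => 1 := by funext y; simp
    have d2 : deriv (fun y : ℝ => y ^ 2) = fun y => 2 * y := by funext y; simp
    have d3 : deriv (fun y : ℝ => 2 * y) = fun _ => 2 := by
      funext y
      simpa using ((hasDerivAt_id y).const_mul 2).deriv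
    by_cases hβ : gB x₁ = 0
    · refine core hbc hσc hσ hu₂ hut₂ hε hobs₂ hobsd₂ h01 (fun x hx => (hagree x hx).2)
        (fun x hx => (hagree x hx).1) cA cB hA hB ?_
      rw [i2, d2, d3, hβ]
      have : gA x₁ ≠ 0 := hne.resolve_right (by simpa using hβ)
      simpa using this
    · refine core hbc hσc hσ hu₁ hut₁ hε hobs₁ hobsd₁ h01 (fun x hx => (hagree x hx).2)
        (fun x hx => (hagree x hx).1) cA cB hA hB ?_
      rw [i1, d1]
      simpa using hβ

theorem eq_nhdsGE {ψ φ : ℝ → ℝ} {x : ℝ} (hψ : Continuous ψ) (hφ : ContinuousAt φ x)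
    (h : ∀ᶠ y in nhdsWithin x (Ioi x), ψ y = φ y) :
    ∀ᶠ y in nhdsWithin x (Ici x), ψ y = φ y := by
  have h1 : Tendsto ψ (nhdsWithin x (Ioi x)) (nhds (ψ x)) := hψ.continuousAt.continuousWithinAt
  have h2 : Tendsto φ (nhdsWithin x (Ioi x)) (nhds (φ x)) := hφ.continuousWithinAt
  have h3 := tendsto_nhds_unique_of_eventuallyEq h1 h2 h
  rw [← Ioi_insert, nhdsWithin_insert, eventually_sup]
  exact ⟨by simpa using h3, h⟩

theorem ClassM.cont {ψ : ℝ → ℝ} (h : ClassM ψ) : Continuous ψ := by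
  obtain ⟨⟨K, hK⟩, -⟩ := h
  exact hK.continuous

theorem exists_cell {κ : ℤ → ℝ} (h1 : StrictMono κ) (hb : Tendsto κ atBot atBot)
    (ht : Tendsto κ atTop atTop) (x : ℝ) : ∃ j, κ j ≤ x ∧ x < κ (j + 1) := by
  obtain ⟨M, hM⟩ := (ht.eventually_gt_atTop x).exists
  obtain ⟨m, hm⟩ := (hb.eventually_le_atBot x).exists
  obtain ⟨j, hj, hj2⟩ := Int.exists_greatest_of_bdd (P := fun j => κ j ≤ x)
    ⟨M, fun z hz => (h1.lt_iff_lt.1 (hz.trans_lt hM)).le⟩ ⟨m, hm⟩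
  refine ⟨j, hj, ?_⟩
  by_contra h
  have := hj2 (j + 1) (not_lt.1 h)
  omega

theorem exists_cell' {κ : ℤ → ℝ} (h1 : StrictMono κ) (hb : Tendsto κ atBot atBot)
    (ht : Tendsto κ atTop atTop) (x : ℝ) : ∃ j, κ j < x ∧ x ≤ κ (j + 1) := by
  obtain ⟨M, hM⟩ := (ht.eventually_gt_atTop x).exists
  obtain ⟨m, hm⟩ := (hb.eventually_lt_atBot x).exists
  obtain ⟨j, hj, hj2⟩ := Int.exists_greatest_of_bdd (P := fun j => κ j < x)
    ⟨M, fun z hz => (h1.lt_iff_lt.1 (hz.trans hM)).le⟩ ⟨m, hm⟩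
  refine ⟨j, hj, ?_⟩
  by_contra h
  have := hj2 (j + 1) (not_le.1 h)
  omega

theorem ClassM.right {ψ : ℝ → ℝ} (h : ClassM ψ) : RightAnalytic ψ := by
  have hc := h.cont
  obtain ⟨-, δ, κ, φ, -, hmono, hbot, htop, -, han, he⟩ := h
  intro x
  obtain ⟨j, hj1, hj2⟩ := exists_cell hmono hbot htop x
  obtain ⟨g, hg1, hg2⟩ := analyticWithinAt_iff_exists_analyticAt'.1 (han j x ⟨hj1, hj2.le⟩)
  refine ⟨g, hg2.2, ?_⟩
  filter_upwards [Ico_mem_nhdsGE hj2] with y hy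
  rw [he j y ⟨hj1.trans hy.1, hy.2⟩]
  exact hg2.1 (Or.inr ⟨hj1.trans hy.1, hy.2.le⟩)

theorem ClassM.left {ψ : ℝ → ℝ} (h : ClassM ψ) : RightAnalytic (fun x => ψ (-x)) := by
  have hc := h.cont
  obtain ⟨-, δ, κ, φ, -, hmono, hbot, htop, -, han, he⟩ := h
  intro x
  obtain ⟨j, hj1, hj2⟩ := exists_cell' hmono hbot htop (-x)
  obtain ⟨g, hg1, hg2⟩ := analyticWithinAt_iff_exists_analyticAt'.1 (han j (-x) ⟨hj1.le, hj2⟩)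
  have hg3 : AnalyticAt ℝ (fun y => g (-y)) x :=
    AnalyticAt.comp (g := g) (f := fun y => -y) hg2.2 analyticAt_id.neg
  refine ⟨fun y => g (-y), hg3, eq_nhdsGE (by fun_prop) hg3.continuousAt ?_⟩
  have : x < -κ j := by linarith
  filter_upwards [Ioo_mem_nhdsGT this] with y hy
  have h1 : κ j < -y := by linarith [hy.2]
  have h2 : -y < κ (j + 1) := by linarith [hy.1]
  rw [he j (-y) ⟨h1.le, h2⟩]
  exact hg2.1 (Or.inr ⟨h1.le, h2.le⟩)

theorem RightAnalytic.neg {ψ : ℝ → ℝ} (h : RightAnalytic ψ) : RightAnalytic (fun x => -ψ x) := by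
  intro x
  obtain ⟨φ, h1, h2⟩ := h x
  exact ⟨fun y => -φ y, h1.neg, h2.mono fun y hy => by simp only [hy]⟩

theorem deriv_refl (m : ℝ) (g : ℝ → ℝ) :
    deriv (fun y => m * g (-y)) = fun y => (-m) * deriv g (-y) := by
  funext y
  rw [deriv_const_mul_field, deriv_comp_neg]
  ring

theorem reflect {T m : ℝ} {b σ f f' : ℝ → ℝ} {u : ℝ → ℝ → ℝ} (h : IsClassicalSolution T b σ f u)
    (hf : ∀ x, f' x = m * f (-x)) :
    IsClassicalSolution T (fun x => -b (-x)) (fun x => σ (-x)) f' (fun t x => m * u t (-x)) := by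
  obtain ⟨uc, ud, ux, uxx, utc, uxc, uxxc, up, u0⟩ := h
  have hmap : ContinuousOn (fun p : ℝ × ℝ => (p.1, -p.2)) (Ico 0 T ×ˢ univ) :=
    Continuous.continuousOn (by fun_prop)
  have hto : MapsTo (fun p : ℝ × ℝ => (p.1, -p.2)) (Ico 0 T ×ˢ univ) (Ico 0 T ×ˢ univ) :=
    fun p hp => ⟨hp.1, trivial⟩
  have e2 : ∀ t, deriv (deriv (fun y => m * u t (-y))) =
      fun y => m * deriv (deriv (fun y => u t y)) (-y) := by
    intro t
    rw [deriv_refl m (fun y => u t y), deriv_refl (-m) (deriv (fun y => u t y))]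
    simp
  have et : ∀ t x, deriv (fun s => m * u s (-x)) t = m * deriv (fun s => u s (-x)) t :=
    fun t x => deriv_const_mul_field m
  refine ⟨continuousOn_const.mul (uc.comp hmap hto), fun t ht x => (ud t ht (-x)).const_mul m,
    fun t ht x => ?_, fun t ht x => ?_, ?_, ?_, ?_, fun t ht x => ?_, fun x => ?_⟩
  · exact (DifferentiableAt.comp (g := fun y => u t y) x (ux t ht (-x))
      differentiableAt_id.neg).const_mul m
  · rw [deriv_refl m (fun y => u t y)]
    exact (DifferentiableAt.comp (g := deriv fun y => u t y) x (uxx t ht (-x))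
      differentiableAt_id.neg).const_mul (-m)
  · simp only [et]
    exact continuousOn_const.mul (utc.comp hmap hto)
  · have : ∀ t, deriv (fun y => m * u t (-y)) = fun y => (-m) * deriv (fun y => u t y) (-y) :=
      fun t => deriv_refl m (fun y => u t y)
    simp only [this]
    exact continuousOn_const.mul (uxc.comp hmap hto)
  · simp only [e2]
    exact continuousOn_const.mul (uxxc.comp hmap hto)
  · rw [et, e2, deriv_refl m (fun y => u t y), up t ht (-x)]
    ring
  · simp only [u0, hf]

/-- Pointwise-observation variant of Theorem 3: both coefficients are uniquely
determined by the values and first spatial derivatives of the first and second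
moments at a single point, for small times. -/
theorem drift_diffusion_uniqueness_pointwise
    (T : ℝ) (hT : 0 < T)
    (b bt sigma sigmat : ℝ → ℝ)
    (hb : ClassM b) (hbt : ClassM bt)
    (hs : ClassM sigma) (hst : ClassM sigmat)
    (hspos : ∀ x, 0 < sigma x) (hstpos : ∀ x, 0 < sigmat x)
    (u₁ u₂ ut₁ ut₂ : ℝ → ℝ → ℝ)
    (hu₁ : IsClassicalSolution T b sigma (fun x => x ^ 1) u₁)
    (hu₂ : IsClassicalSolution T b sigma (fun x => x ^ 2) u₂)
    (hut₁ : IsClassicalSolution T bt sigmat (fun x => x ^ 1) ut₁)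
    (hut₂ : IsClassicalSolution T bt sigmat (fun x => x ^ 2) ut₂)
    (ε : ℝ) (hε : ε ∈ Ioo 0 T) (x₀ : ℝ)
    (hobs₁ : ∀ t ∈ Ioo 0 ε, u₁ t x₀ = ut₁ t x₀)
    (hobs₂ : ∀ t ∈ Ioo 0 ε, u₂ t x₀ = ut₂ t x₀)
    (hobsd₁ : ∀ t ∈ Ioo 0 ε,
      deriv (fun y => u₁ t y) x₀ = deriv (fun y => ut₁ t y) x₀)
    (hobsd₂ : ∀ t ∈ Ioo 0 ε,
      deriv (fun y => u₂ t y) x₀ = deriv (fun y => ut₂ t y) x₀) :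
    ∀ x : ℝ, b x = bt x ∧ sigma x = sigmat x := by
  intro x
  rcases le_total x₀ x with hx | hx
  · exact right_side hb.cont hs.cont hb.right hbt.right hs.right hst.right hspos hstpos
      hu₁ hu₂ hut₁ hut₂ hε hobs₁ hobs₂ hobsd₁ hobsd₂ x hx
  · have r1 : ∀ x : ℝ, x ^ 1 = (-1) * (-x) ^ 1 := fun x => by ring
    have r2 : ∀ x : ℝ, x ^ 2 = 1 * (-x) ^ 2 := fun x => by ring
    have hbc := hb.cont
    have hsc := hs.cont
    have key := right_side (b := fun x => -b (-x)) (bt := fun x => -bt (-x))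
      (σ := fun x => sigma (-x)) (σt := fun x => sigmat (-x)) (by fun_prop) (by fun_prop)
      hb.left.neg hbt.left.neg hs.left hst.left (fun x => hspos _) (fun x => hstpos _)
      (reflect hu₁ r1) (reflect hu₂ r2) (reflect hut₁ r1) (reflect hut₂ r2) hε (x₀ := -x₀)
      (fun t ht => by simp [hobs₁ t ht]) (fun t ht => by simp [hobs₂ t ht])
      (fun t ht => by
        rw [deriv_refl (-1) (fun y => u₁ t y), deriv_refl (-1) (fun y => ut₁ t y)]
        simp [hobsd₁ t ht])
      (fun t ht => by
        rw [deriv_refl 1 (fun y => u₂ t y), deriv_refl 1 (fun y => ut₂ t y)]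
        simp [hobsd₂ t ht])
      (-x) (by linarith)
    simpa using key
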